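/- For every nonnegative integer n, b^2_{4,5}(8n+7) ≡ 0 (mod 40). -/

import Mathlib

/-- `coloredRegular k l m n` is the number of `k`-colored partitions of `n` into parts
divisible by neither `l` nor `m`, i.e. the coefficient of `q^n` in
`∏_{j ≥ 1, l ∤ j, m ∤ j} (1 - q^j)^{-k}`.  A `k`-colored partition is a multiset of
(part, color) pairs, where parts are positive integers not divisible by `l` or `m`
and colors range over `{0, …, k-1}`. -/
noncomputable def coloredRegular (k l m n : ℕ) : ℕ :=
  Nat.card {M : Multiset (ℕ × ℕ) //
    (∀ x ∈ M, ¬ l ∣ x.1 ∧ ¬ m ∣ x.1 ∧ x.2 < k) ∧ (M.map Prod.fst).sum = n}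

/-!
By unique factorization of multisets, the generating function `G` of `b^2_{4,5}` satisfies
`G = f₄² f₅² / (f₁² f₂₀²)` with `f_k = ∏ (1 - q^{kn})`.

Modulo `8`: splitting one double theta series over the cosets of two different sublattices of `ℤ²`
gives a 2-dissection of `f₅ / f₁`. Squaring it shows that `∑ b(2n+1) qⁿ = 2 f₂⁵ f₅ / (f₁⁵ f₁₀)`.
As `f₁⁴ ≡ f₂² (mod 4)`, this is `2 f₂³ f₅ / (f₁ f₁₀)` modulo `8`, so the same 2-dissection applies
again; it leaves `∑ b(4n+3) qⁿ ≡ 2 f₂³ f₂₀ / (f₄ f₁₀)`, which is even in `q`. Hence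
`8 ∣ b(8n+7)`.

Modulo `5`: `f₅ ≡ f₁⁵` and `f₂₀ ≡ f₄⁵` give `G ≡ f₁⁸ / f₄⁸`. The 2-dissection of `f₁⁴`, which is
Ramanujan's `φ(-q)² = φ(q²)² - 4 q ψ(q⁴)²`, shows that the odd part of `f₁⁸ / f₄⁸` is exactly
`-8 q`, so that `5 ∣ b(2n+1)` for all `n ≥ 1`.
-/

open Filter Topology PowerSeries Finset

section FiniteProducts

variable {R : Type*} [CommRing R] (x : R)

/-- The polynomial `∏_{i ≤ n} (1 + xⁱ) · ∑_{|s| ≤ n} (-x) ^ s²` of Shanks' finite form of Gauss'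
square identity, written so that it is visibly close to `∏_{i ≤ n} (1 - xⁱ)`. -/
def shanksSquare (n : ℕ) : R := ∏ i ∈ range n, (1 - x ^ (i + 1)) -
  2 * ∑ s ∈ range n, (-1) ^ s * (∏ i ∈ range s, (1 + x ^ (i + 1))) *
    (∏ i ∈ Ico (s + 1) n, (1 - x ^ (i + 1))) * x ^ ((s + 1) * (n + 1))

theorem shanksSquare_succ (n : ℕ) : shanksSquare x (n + 1) =
    (1 + x ^ (n + 1)) * shanksSquare x n -
      2 * (-1) ^ n * (∏ i ∈ range (n + 1), (1 + x ^ (i + 1))) * x ^ (n + 1) ^ 2 := by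
  let t (s : ℕ) : R := (-1) ^ s * (∏ i ∈ range s, (1 + x ^ (i + 1))) *
    (∏ i ∈ Ico s n, (1 - x ^ (i + 1))) * x ^ ((s + 1) * (n + 1))
  have telescoping : ∀ s ∈ range n,
      (-1) ^ s * (∏ i ∈ range s, (1 + x ^ (i + 1))) *
        (∏ i ∈ Ico (s + 1) (n + 1), (1 - x ^ (i + 1))) * x ^ ((s + 1) * (n + 1 + 1)) =
      (1 + x ^ (n + 1)) * ((-1) ^ s * (∏ i ∈ range s, (1 + x ^ (i + 1))) *
        (∏ i ∈ Ico (s + 1) n, (1 - x ^ (i + 1))) * x ^ ((s + 1) * (n + 1))) +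
      (t (s + 1) - t s) := by
    intro s hs
    rw [mem_range] at hs
    simp only [t]
    rw [prod_Ico_succ_top (by lia), prod_range_succ, prod_eq_prod_Ico_succ_bot hs]
    ring
  rw [shanksSquare, shanksSquare, sum_range_succ, sum_congr rfl telescoping, sum_add_distrib,
    sum_range_sub t, ← mul_sum, prod_range_succ, prod_range_succ]
  simp only [t, Ico_self, prod_empty, range_eq_Ico]
  ring

theorem prod_one_add_pow_mul_sum_pow_sq (n : ℕ) :
    (∏ i ∈ range n, (1 + x ^ (i + 1))) * (1 + 2 * ∑ s ∈ range n, (-x) ^ (s + 1) ^ 2) =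
      shanksSquare x n := by
  induction n with
  | zero => simp [shanksSquare]
  | succ n ih =>
    have hsign : (-x) ^ (n + 1) ^ 2 = -(-1) ^ n * x ^ (n + 1) ^ 2 := by
      rw [neg_pow, neg_one_pow_congr (n := n + 1) (by simp [Nat.even_pow]), pow_succ, mul_neg_one]
    rw [shanksSquare_succ, ← ih, sum_range_succ, prod_range_succ, hsign]
    ring

theorem pow_dvd_shanksSquare_sub (n : ℕ) :
    x ^ n ∣ shanksSquare x n - ∏ i ∈ range n, (1 - x ^ (i + 1)) := by
  rw [shanksSquare, sub_sub_cancel_left, dvd_neg]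
  refine Dvd.dvd.mul_left (dvd_sum fun s _ ↦ Dvd.dvd.mul_left (pow_dvd_pow _ ?_) _) _
  nlinarith

/-- The polynomial `∏_{i < n} (1 - x ^ (2i + 1)) · ∑_{s < 2n} x ^ (s(s + 1)/2)` of Shanks' finite
form of Gauss' triangular number identity, written so that it is visibly close to
`∏_{i ≤ n} (1 - x ^ (2i))`. -/
def shanksTriangular (n : ℕ) : R := ∑ s ∈ range n, (∏ i ∈ range s, (1 - x ^ (2 * i + 1))) *
  (∏ i ∈ Ico s n, (1 - x ^ (2 * (i + 1)))) * x ^ (s * (2 * n + 1))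

theorem shanksTriangular_succ (n : ℕ) : shanksTriangular x (n + 1) =
    (1 - x ^ (2 * n + 1)) * shanksTriangular x n +
      (∏ i ∈ range (n + 1), (1 - x ^ (2 * i + 1))) *
        (x ^ (n * (2 * n + 1)) + x ^ ((n + 1) * (2 * n + 1))) := by
  let t (s : ℕ) : R := (∏ i ∈ range s, (1 - x ^ (2 * i + 1))) *
    (∏ i ∈ Ico s n, (1 - x ^ (2 * (i + 1)))) * (1 - x ^ (2 * s)) * x ^ (s * (2 * n + 1))
  have telescoping : ∀ s ∈ range n,
      (∏ i ∈ range s, (1 - x ^ (2 * i + 1))) *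
        (∏ i ∈ Ico s (n + 1), (1 - x ^ (2 * (i + 1)))) * x ^ (s * (2 * (n + 1) + 1)) =
      (1 - x ^ (2 * n + 1)) * ((∏ i ∈ range s, (1 - x ^ (2 * i + 1))) *
        (∏ i ∈ Ico s n, (1 - x ^ (2 * (i + 1)))) * x ^ (s * (2 * n + 1))) +
      (t (s + 1) - t s) := by
    intro s hs
    rw [mem_range] at hs
    simp only [t]
    rw [prod_Ico_succ_top (by lia), prod_range_succ, prod_eq_prod_Ico_succ_bot hs]
    ring
  rw [shanksTriangular, shanksTriangular, sum_range_succ, sum_congr rfl telescoping,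
    sum_add_distrib, sum_range_sub t, ← mul_sum, prod_range_succ, prod_Ico_succ_top le_rfl]
  simp only [t, Ico_self, prod_empty, range_zero]
  ring

theorem prod_one_sub_odd_pow_mul_sum_pow_triangle (n : ℕ) :
    (∏ i ∈ range n, (1 - x ^ (2 * i + 1))) * ∑ s ∈ range (2 * n), x ^ (s * (s + 1) / 2) =
      shanksTriangular x n := by
  induction n with
  | zero => simp [shanksTriangular]
  | succ n ih =>
    have heven : 2 * n * (2 * n + 1) / 2 = n * (2 * n + 1) := by
      rw [mul_assoc, Nat.mul_div_cancel_left _ two_pos]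
    have hodd : (2 * n + 1) * (2 * n + 1 + 1) / 2 = (n + 1) * (2 * n + 1) :=
      Nat.div_eq_of_eq_mul_left two_pos (by ring)
    rw [shanksTriangular_succ, ← ih, mul_add_one, sum_range_succ, sum_range_succ,
      prod_range_succ, heven, hodd]
    ring

theorem pow_dvd_shanksTriangular_sub (n : ℕ) :
    x ^ n ∣ shanksTriangular x n - ∏ i ∈ range n, (1 - (x ^ 2) ^ (i + 1)) := by
  cases n with
  | zero => simp
  | succ n =>
    simp_rw [← pow_mul]
    rw [shanksTriangular, sum_range_succ']
    simp only [prod_range_zero, one_mul, zero_mul, pow_zero, mul_one, ← range_eq_Ico,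
      add_sub_cancel_right]
    refine dvd_sum fun s _ ↦ Dvd.dvd.mul_left (pow_dvd_pow _ ?_) _
    nlinarith

theorem prod_one_add_pow_mul_prod_one_sub_pow (n : ℕ) :
    (∏ i ∈ range n, (1 + x ^ (i + 1))) * ∏ i ∈ range n, (1 - x ^ (i + 1)) =
      ∏ i ∈ range n, (1 - (x ^ 2) ^ (i + 1)) := by
  rw [← prod_mul_distrib]
  exact prod_congr rfl fun i _ ↦ by ring

theorem prod_one_sub_odd_pow_mul_prod_one_sub_even_pow (n : ℕ) :
    (∏ i ∈ range n, (1 - x ^ (2 * i + 1))) * ∏ i ∈ range n, (1 - (x ^ 2) ^ (i + 1)) =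
      ∏ i ∈ range (2 * n), (1 - x ^ (i + 1)) := by
  induction n with
  | zero => simp
  | succ n ih =>
    rw [mul_add_one, prod_range_succ, prod_range_succ, prod_range_succ, prod_range_succ, ← ih]
    ring

theorem prod_one_sub_neg_pow_mul_prod_one_sub_pow (n : ℕ) :
    (∏ i ∈ range (2 * n), (1 - (-x) ^ (i + 1))) * (∏ i ∈ range (2 * n), (1 - x ^ (i + 1))) *
        ∏ i ∈ range n, (1 - (x ^ 4) ^ (i + 1)) =
      (∏ i ∈ range n, (1 - (x ^ 2) ^ (i + 1))) ^ 2 *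
        ∏ i ∈ range (2 * n), (1 - (x ^ 2) ^ (i + 1)) := by
  induction n with
  | zero => simp
  | succ n ih =>
    rw [mul_add_one]
    simp only [prod_range_succ]
    have hodd : (-x) ^ (2 * n + 1) = -x ^ (2 * n + 1) := Odd.neg_pow ⟨n, rfl⟩ x
    have heven : (-x) ^ (2 * n + 1 + 1) = x ^ (2 * n + 1 + 1) :=
      Even.neg_pow ⟨n + 1, by ring⟩ x
    rw [hodd, heven]
    linear_combination (1 - x ^ (4 * n + 2)) * (1 - x ^ (2 * n + 2)) ^ 2 *
      (1 - x ^ (4 * n + 4)) * ih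

end FiniteProducts

section LinearTopology

variable {R : Type*} [CommRing R] [TopologicalSpace R] [IsLinearTopology R R] {x : R}

theorem isTopologicallyNilpotent_neg (hx : IsTopologicallyNilpotent x) :
    IsTopologicallyNilpotent (-x) := by
  simpa using hx.mul_left (-1)

theorem isTopologicallyNilpotent_pow (hx : IsTopologicallyNilpotent x) {k : ℕ} (hk : k ≠ 0) :
    IsTopologicallyNilpotent (x ^ k) := by
  obtain ⟨k, rfl⟩ := Nat.exists_eq_succ_of_ne_zero hk
  simpa [pow_succ] using hx.mul_left (x ^ k)

variable [IsTopologicalRing R]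

theorem nonarchimedeanRing_of_isLinearTopology (R : Type*) [CommRing R] [TopologicalSpace R]
    [IsTopologicalRing R] [IsLinearTopology R R] : NonarchimedeanRing R where
  is_nonarchimedean U hU := by
    obtain ⟨I, hI, hIU⟩ := IsLinearTopology.hasBasis_open_ideal.mem_iff.mp hU
    exact ⟨⟨I.toAddSubgroup, hI⟩, hIU⟩

theorem tendsto_of_pow_dvd_sub {f g : ℕ → R} {a : R} (hx : IsTopologicallyNilpotent x)
    (hf : Tendsto f atTop (𝓝 a)) (hfg : ∀ n, x ^ n ∣ g n - f n) : Tendsto g atTop (𝓝 a) := by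
  choose c hc using hfg
  have hzero : Tendsto (fun n ↦ c n * x ^ n) atTop (𝓝 0) :=
    IsLinearTopology.tendsto_mul_zero_of_right _ _ hx
  simpa [mul_comm (c _), ← hc] using hzero.add hf

end LinearTopology

/-- The triangular number `n(n + 1)/2`, with `n` ranging over all integers, so that every value is
attained twice. -/
def triangular (n : ℤ) : ℕ := (n * (n + 1) / 2).toNat

theorem two_mul_natCast_triangular (n : ℤ) : 2 * (triangular n : ℤ) = n * (n + 1) := by
  have hnonneg : 0 ≤ n * (n + 1) := by
    rcases le_or_gt 0 n with hn | hn <;> nlinarith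
  rw [triangular, Int.toNat_of_nonneg (by positivity),
    Int.mul_ediv_cancel' (Int.even_mul_succ_self n).two_dvd]

section Theta

variable {R : Type*} [CommRing R]

/-- Euler's function `∏_{n ≥ 1} (1 - xⁿ)`. -/
noncomputable def eulerFun [TopologicalSpace R] (x : R) : R := ∏' n : ℕ, (1 - x ^ (n + 1))

/-- Ramanujan's theta function `φ(x) = ∑_{n ∈ ℤ} x ^ n²`. -/
noncomputable def thetaPhi [TopologicalSpace R] (x : R) : R := ∑' n : ℤ, x ^ n.natAbs ^ 2

/-- Ramanujan's theta function `ψ(x) = ∑_{n ≥ 0} x ^ (n(n + 1)/2)`. -/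
noncomputable def thetaPsi [TopologicalSpace R] (x : R) : R := ∑' n : ℕ, x ^ (n * (n + 1) / 2)

variable [UniformSpace R] [IsUniformAddGroup R] [IsTopologicalRing R] [IsLinearTopology R R]
  [CompleteSpace R] {x : R}

theorem summable_intCast_mul_pow {ι : Type*} (hx : IsTopologicallyNilpotent x) (c : ι → ℤ)
    {w : ι → ℕ} (hw : ∀ n, (w ⁻¹' {n}).Finite) : Summable fun i ↦ (c i : R) * x ^ w i := by
  have := nonarchimedeanRing_of_isLinearTopology R
  have hwtop : Tendsto w cofinite atTop := by
    simpa [Nat.cofinite_eq_atTop] using Tendsto.cofinite_of_finite_preimage_singleton hw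
  exact NonarchimedeanAddGroup.summable_of_tendsto_cofinite_zero <|
    IsLinearTopology.tendsto_mul_zero_of_right _ _ (hx.comp hwtop)

theorem hasSum_thetaPhi (hx : IsTopologicallyNilpotent x) :
    HasSum (fun n : ℤ ↦ x ^ n.natAbs ^ 2) (thetaPhi x) := by
  have hw (m : ℕ) : ((fun n : ℤ ↦ n.natAbs ^ 2) ⁻¹' {m}).Finite := by
    refine (Set.finite_Icc (-m : ℤ) m).subset fun n hn ↦ ?_
    have := Nat.le_self_pow two_ne_zero n.natAbs
    simp only [Set.mem_preimage, Set.mem_singleton_iff, Set.mem_Icc] at hn ⊢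
    lia
  simpa [thetaPhi] using (summable_intCast_mul_pow hx 1 hw).hasSum

theorem hasSum_thetaPsi (hx : IsTopologicallyNilpotent x) :
    HasSum (fun n : ℕ ↦ x ^ (n * (n + 1) / 2)) (thetaPsi x) := by
  have hw (m : ℕ) : ((fun n : ℕ ↦ n * (n + 1) / 2) ⁻¹' {m}).Finite := by
    refine (Set.finite_Iic m).subset fun n hn ↦ ?_
    rw [← Set.mem_singleton_iff.mp hn, Set.mem_Iic, Nat.le_div_iff_mul_le two_pos]
    nlinarith [Nat.le_mul_self n]
  simpa [thetaPsi] using (summable_intCast_mul_pow hx 1 hw).hasSum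

theorem hasSum_int_thetaPsi (hx : IsTopologicallyNilpotent x) :
    HasSum (fun n : ℤ ↦ x ^ triangular n) (2 * thetaPsi x) := by
  have h := hasSum_thetaPsi hx
  rw [two_mul]
  refine HasSum.of_nat_of_neg_add_one ?_ ?_
  · exact_mod_cast h
  · convert h using 3 with n
    rw [triangular, show -((n : ℤ) + 1) * (-(n + 1) + 1) = (n * (n + 1) : ℕ) by push_cast; ring]
    norm_cast

variable [T2Space R]

theorem hasProd_eulerFun (hx : IsTopologicallyNilpotent x) :
    HasProd (fun n ↦ 1 - x ^ (n + 1)) (eulerFun x) := by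
  open scoped PowerSeries.WithPiTopology in
  have h := (WithPiTopology.hasProd_one_sub_X_pow ℤ).map (aeval hx) (continuous_aeval hx)
  have hX : aeval (R := ℤ) hx X = x := by simpa using aeval_coe (R := ℤ) hx Polynomial.X
  simpa [Function.comp_def, hX, eulerFun] using h.multipliable.hasProd

theorem hasSum_pentagonal (hx : IsTopologicallyNilpotent x) :
    HasSum (fun k : ℤ ↦ ((Int.negOnePow k : ℤ) : R) * x ^ pentagonal k) (eulerFun x) := by
  open scoped PowerSeries.WithPiTopology in
  have hprod := (WithPiTopology.hasProd_one_sub_X_pow ℤ).map (aeval hx) (continuous_aeval hx)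
  have hsum := (WithPiTopology.hasSum_pentagonalSeries ℤ).map (aeval hx) (continuous_aeval hx)
  have hX : aeval (R := ℤ) hx X = x := by simpa using aeval_coe (R := ℤ) hx Polynomial.X
  have heq : aeval hx (pentagonalSeries ℤ) = eulerFun x := by
    refine hprod.unique ?_
    simpa [Function.comp_def, hX] using hasProd_eulerFun hx
  simpa [Function.comp_def, hX, heq] using hsum

theorem tendsto_prod_eulerFun (hx : IsTopologicallyNilpotent x) :
    Tendsto (fun n ↦ ∏ i ∈ range n, (1 - x ^ (i + 1))) atTop (𝓝 (eulerFun x)) :=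
  (hasProd_eulerFun hx).tendsto_prod_nat

theorem eulerFun_sq_mul_thetaPhi_neg (hx : IsTopologicallyNilpotent x) :
    eulerFun (x ^ 2) * thetaPhi (-x) = eulerFun x ^ 2 := by
  have hx' := isTopologicallyNilpotent_neg hx
  have hx₂ := isTopologicallyNilpotent_pow hx two_ne_zero
  rw [sq (eulerFun x)]
  have hsum : Tendsto (fun n ↦ 1 + 2 * ∑ s ∈ range n, (-x) ^ (s + 1) ^ 2) atTop
      (𝓝 (thetaPhi (-x))) := by
    have h := (hasSum_thetaPhi hx').nat_add_neg.tendsto_sum_nat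
    convert (h.comp (tendsto_add_atTop_nat 1)).sub_const 1 using 2 with n
    · simp only [Function.comp_apply, Int.natAbs_neg, Int.natAbs_natCast, ← two_mul, ← mul_sum,
        sum_range_succ']
      ring
    · simp
  have hshanks : Tendsto (shanksSquare x) atTop (𝓝 (eulerFun x)) :=
    tendsto_of_pow_dvd_sub hx (tendsto_prod_eulerFun hx) (pow_dvd_shanksSquare_sub x)
  refine tendsto_nhds_unique (((tendsto_prod_eulerFun hx₂).mul hsum).congr fun n ↦ ?_)
    ((tendsto_prod_eulerFun hx).mul hshanks)
  rw [← prod_one_add_pow_mul_prod_one_sub_pow, ← prod_one_add_pow_mul_sum_pow_sq]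
  ring

theorem eulerFun_mul_thetaPsi (hx : IsTopologicallyNilpotent x) :
    eulerFun x * thetaPsi x = eulerFun (x ^ 2) ^ 2 := by
  have hx₂ := isTopologicallyNilpotent_pow hx two_ne_zero
  have hdouble : Tendsto (fun n : ℕ ↦ 2 * n) atTop atTop := tendsto_id.const_mul_atTop' two_pos
  have hshanks : Tendsto (shanksTriangular x) atTop (𝓝 (eulerFun (x ^ 2))) :=
    tendsto_of_pow_dvd_sub hx (tendsto_prod_eulerFun hx₂) (pow_dvd_shanksTriangular_sub x)
  rw [sq (eulerFun _)]
  refine tendsto_nhds_unique ((((tendsto_prod_eulerFun hx).mul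
    (hasSum_thetaPsi hx).tendsto_sum_nat).comp hdouble).congr fun n ↦ ?_)
    ((tendsto_prod_eulerFun hx₂).mul hshanks)
  rw [Function.comp_apply, ← prod_one_sub_odd_pow_mul_prod_one_sub_even_pow,
    ← prod_one_sub_odd_pow_mul_sum_pow_triangle]
  ring

theorem eulerFun_neg_mul_eulerFun (hx : IsTopologicallyNilpotent x) :
    eulerFun (-x) * eulerFun x * eulerFun (x ^ 4) = eulerFun (x ^ 2) ^ 3 := by
  have hdouble : Tendsto (fun n : ℕ ↦ 2 * n) atTop atTop := tendsto_id.const_mul_atTop' two_pos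
  have h₁ := (tendsto_prod_eulerFun (isTopologicallyNilpotent_neg hx)).comp hdouble
  have h₂ := (tendsto_prod_eulerFun hx).comp hdouble
  have h₃ := tendsto_prod_eulerFun (isTopologicallyNilpotent_pow hx two_ne_zero)
  have h₄ := tendsto_prod_eulerFun (isTopologicallyNilpotent_pow hx four_ne_zero)
  rw [pow_succ (eulerFun _)]
  exact tendsto_nhds_unique (((h₁.mul h₂).mul h₄).congr fun n ↦
    prod_one_sub_neg_pow_mul_prod_one_sub_pow x n) ((h₃.pow 2).mul (h₃.comp hdouble))

end Theta

section Dissection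

theorem injective_of_bijective_uncurry {κ α β : Type*} {e : κ → α → β}
    (he : (Function.uncurry e).Bijective) (k : κ) : (e k).Injective :=
  fun _ _ h ↦ (Prod.ext_iff.mp (he.1 h : (k, _) = (k, _))).2

theorem hasSum_sum_of_bijective {R κ α β : Type*} [AddCommMonoid R] [TopologicalSpace R]
    [ContinuousAdd R] [Fintype κ] {f : β → R} (e : κ → α → β) (he : (Function.uncurry e).Bijective)
    {s : κ → R} (hs : ∀ k, HasSum (f ∘ e k) (s k)) : HasSum f (∑ k, s k) := by
  have hdisj : ((univ : Finset κ) : Set κ).PairwiseDisjoint fun k ↦ Set.range (e k) := by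
    refine fun k _ l _ hkl ↦ Set.disjoint_left.mpr ?_
    rintro _ ⟨a, rfl⟩ ⟨b, hb⟩
    exact hkl (Prod.ext_iff.mp (he.1 hb.symm : (k, a) = (l, b))).1
  have h := hasSum_sum_disjoint univ hdisj fun k _ ↦
    (injective_of_bijective_uncurry he k).hasSum_range_iff.mpr (hs k)
  refine (hasSum_subtype_iff_of_support_subset fun b _ ↦ ?_).mp h
  obtain ⟨⟨k, a⟩, rfl⟩ := he.2 b
  exact Set.mem_biUnion (mem_univ k) ⟨a, rfl⟩

theorem hasSum_zero_of_comp_equiv_eq_neg {R α : Type*} [AddCommGroup R] [TopologicalSpace R]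
    [IsTopologicalAddGroup R] [T2Space R] [IsAddTorsionFree R] {f : α → R} (hf : Summable f)
    (σ : α ≃ α) (hσ : ∀ a, f (σ a) = -f a) : HasSum f 0 := by
  have hself : ∑' a, f a = -∑' a, f a := by
    rw [← tsum_neg, ← σ.tsum_eq f]
    simp_rw [hσ]
  simpa [self_eq_neg.mp hself] using hf.hasSum

theorem natAbs_add_sq_add_natAbs_sub_sq (a b : ℤ) :
    (a + b).natAbs ^ 2 + (a - b).natAbs ^ 2 = 2 * (a.natAbs ^ 2 + b.natAbs ^ 2) := by
  zify
  simp only [sq_abs]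
  ring

theorem natAbs_add_add_one_sq_add_natAbs_sub_sq (a b : ℤ) :
    (a + b + 1).natAbs ^ 2 + (a - b).natAbs ^ 2 = 4 * (triangular a + triangular b) + 1 := by
  zify
  simp only [sq_abs]
  linear_combination -2 * two_mul_natCast_triangular a - 2 * two_mul_natCast_triangular b

/-- Parametrizations by `ℤ × ℤ` of the points `(u, v)` with `u + v` even (class `0`) and odd
(class `1`), in which `u² + v²` becomes diagonal. -/
def parityClass : Fin 2 → ℤ × ℤ → ℤ × ℤ
  | 0, (a, b) => (a + b, a - b)
  | 1, (a, b) => (a + b + 1, a - b)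

theorem bijective_uncurry_parityClass : (Function.uncurry parityClass).Bijective := by
  constructor
  · rintro ⟨i, a, b⟩ ⟨j, c, d⟩ h
    fin_cases i <;> fin_cases j <;> grind [parityClass, Function.uncurry]
  · rintro ⟨u, v⟩
    obtain ⟨k, hk | hk⟩ := Int.even_or_odd' (u + v)
    · exact ⟨(0, k, k - v), by grind [parityClass, Function.uncurry]⟩
    · exact ⟨(1, k, k - v), by grind [parityClass, Function.uncurry]⟩

variable {R : Type*} [CommRing R] [UniformSpace R] [IsUniformAddGroup R] [IsTopologicalRing R]
  [IsLinearTopology R R] [CompleteSpace R] [T2Space R] {x : R}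

theorem thetaPhi_neg_sq (hx : IsTopologicallyNilpotent x) :
    thetaPhi (-x) ^ 2 = thetaPhi (x ^ 2) ^ 2 - 4 * x * thetaPsi (x ^ 4) ^ 2 := by
  have := nonarchimedeanRing_of_isLinearTopology R
  have hphi := hasSum_thetaPhi (isTopologicallyNilpotent_neg hx)
  have hphi₂ := hasSum_thetaPhi (isTopologicallyNilpotent_pow hx two_ne_zero)
  have hpsi₄ := hasSum_int_thetaPsi (isTopologicallyNilpotent_pow hx four_ne_zero)
  have heven (p : ℤ × ℤ) : (-x) ^ (p.1 + p.2).natAbs ^ 2 * (-x) ^ (p.1 - p.2).natAbs ^ 2 =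
      (x ^ 2) ^ p.1.natAbs ^ 2 * (x ^ 2) ^ p.2.natAbs ^ 2 := by
    rw [← pow_add, natAbs_add_sq_add_natAbs_sub_sq, pow_mul, pow_add, neg_sq]
  have hodd (p : ℤ × ℤ) : (-x) ^ (p.1 + p.2 + 1).natAbs ^ 2 * (-x) ^ (p.1 - p.2).natAbs ^ 2 =
      -x * ((x ^ 4) ^ triangular p.1 * (x ^ 4) ^ triangular p.2) := by
    rw [← pow_add, natAbs_add_add_one_sq_add_natAbs_sub_sq, pow_succ, pow_mul, pow_add,
      (by decide : Even 4).neg_pow]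
    ring
  have hsum := hasSum_sum_of_bijective parityClass bijective_uncurry_parityClass
    (f := fun p ↦ (-x) ^ p.1.natAbs ^ 2 * (-x) ^ p.2.natAbs ^ 2)
    (s := ![thetaPhi (x ^ 2) * thetaPhi (x ^ 2),
      -x * (2 * thetaPsi (x ^ 4) * (2 * thetaPsi (x ^ 4)))]) fun k ↦ by
    fin_cases k
    · exact (hphi₂.mul_of_nonarchimedean hphi₂).congr_fun heven
    · exact ((hpsi₄.mul_of_nonarchimedean hpsi₄).mul_left (-x)).congr_fun hodd
  rw [sq, (hphi.mul_of_nonarchimedean hphi).unique hsum]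
  simp only [Fin.sum_univ_two, Matrix.cons_val_zero, Matrix.cons_val_one, Matrix.cons_val_fin_one]
  ring

end Dissection

section Lattice

/-- The exponent `((2t + 1 - v)² + 5v² - 1) / 4` at the point `(t, v)` of the double series that is
split in two ways to prove `eulerFun_mul_eulerFun_neg_pow_five`. -/
def latticeExponent (p : ℤ × ℤ) : ℕ := (p.1 * (p.1 + 1) - p.1 * p.2 + pentagonal p.2).toNat

theorem four_mul_natCast_latticeExponent_add_one (p : ℤ × ℤ) :
    4 * (latticeExponent p : ℤ) + 1 = (2 * p.1 + 1 - p.2) ^ 2 + 5 * p.2 ^ 2 := by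
  have h := two_mul_natCast_pentagonal p.2
  have hnonneg : 0 ≤ p.1 * (p.1 + 1) - p.1 * p.2 + pentagonal p.2 := by
    have hsq : 0 < (2 * p.1 + 1 - p.2) ^ 2 + 5 * p.2 ^ 2 := by
      rcases eq_or_ne p.2 0 with hp | hp
      · rw [hp]
        have : 2 * p.1 + 1 ≠ 0 := by omega
        positivity
      · positivity
    linarith
  rw [latticeExponent, Int.toNat_of_nonneg hnonneg]
  linear_combination 2 * h

theorem finite_preimage_latticeExponent (m : ℕ) : (latticeExponent ⁻¹' {m}).Finite := by
  refine (Set.finite_Icc ((-(4 * m + 2), -(4 * m + 2)) : ℤ × ℤ) (4 * m + 2, 4 * m + 2)).subset ?_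
  intro p hp
  have h := four_mul_natCast_latticeExponent_add_one p
  rw [Set.mem_singleton_iff.mp hp] at h
  have hsq₁ := Int.natAbs_le_self_sq p.2
  have hsq₂ := Int.natAbs_le_self_sq (2 * p.1 + 1 - p.2)
  simp only [Set.mem_Icc, Prod.le_def]
  omega

variable {R : Type*} [CommRing R]

/-- The term `(-1) ^ (v + t(t+1)/2) * x ^ latticeExponent (t, v)` of the double series that is split
in two ways to prove `eulerFun_mul_eulerFun_neg_pow_five`. -/
def latticeTerm (x : R) (p : ℤ × ℤ) : R :=
  (Int.negOnePow (p.2 + triangular p.1) : ℤ) * x ^ latticeExponent p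

theorem negOnePow_mul_pow_congr (x : R) {s s' : ℤ} {m m' : ℕ} (hs : Even (s - s'))
    (hm : (4 * m + 1 : ℤ) = 4 * m' + 1) :
    ((Int.negOnePow s : ℤ) : R) * x ^ m = (Int.negOnePow s' : ℤ) * x ^ m' := by
  rw [(Int.negOnePow_eq_iff _ _).mpr hs, show m = m' by omega]

theorem latticeTerm_eq_neg {x : R} {p p' : ℤ × ℤ}
    (hs : Odd (p.2 + triangular p.1 - (p'.2 + triangular p'.1)))
    (he : (2 * p.1 + 1 - p.2) ^ 2 + 5 * p.2 ^ 2 = (2 * p'.1 + 1 - p'.2) ^ 2 + 5 * p'.2 ^ 2) :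
    latticeTerm x p = -latticeTerm x p' := by
  rw [← four_mul_natCast_latticeExponent_add_one, ← four_mul_natCast_latticeExponent_add_one] at he
  have hs' : Even (p.2 + triangular p.1 - (p'.2 + triangular p'.1 + 1)) := by
    rw [← sub_sub]
    exact hs.sub_odd odd_one
  rw [latticeTerm, negOnePow_mul_pow_congr x hs' he, Int.negOnePow_succ, latticeTerm]
  push_cast
  ring

theorem triangular_two_mul_add (k b : ℤ) :
    (triangular (2 * k + b) : ℤ) = triangular b + 2 * k ^ 2 + 2 * k * b + k := by
  linarith [two_mul_natCast_triangular (2 * k + b), two_mul_natCast_triangular b]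

theorem neg_pow_eq_negOnePow_mul_pow (x : R) (m : ℕ) :
    (-x) ^ m = ((Int.negOnePow m : ℤ) : R) * x ^ m := by
  rw [neg_pow, Int.coe_negOnePow_natCast]
  push_cast
  rfl

theorem natCast_natAbs_sq (k : ℤ) : ((k.natAbs ^ 2 : ℕ) : ℤ) = k ^ 2 := by simp

theorem triangular_three_mul_sub_one (n : ℤ) :
    (triangular (3 * n - 1) : ℤ) = 3 * pentagonal n := by
  linarith [two_mul_natCast_triangular (3 * n - 1), two_mul_natCast_pentagonal n]

theorem latticeTerm_reflect (x : R) (t v : ℤ) :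
    latticeTerm x (-1 - t, -v) = latticeTerm x (t, v) := by
  have hT : (triangular (-1 - t) : ℤ) = triangular t := by
    linarith [two_mul_natCast_triangular (-1 - t), two_mul_natCast_triangular t]
  apply negOnePow_mul_pow_congr
  · rw [hT]
    exact ⟨-v, by ring⟩
  · simp only [four_mul_natCast_latticeExponent_add_one]
    ring

theorem latticeTerm_eq_pentagonal (x : R) (m n : ℤ) : latticeTerm x (3 * n - 1, n - m) =
    ((Int.negOnePow m : ℤ) * x ^ pentagonal m) *
      ((Int.negOnePow n : ℤ) * (-x ^ 5) ^ pentagonal n) := by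
  trans ((Int.negOnePow (m + n + pentagonal n) : ℤ) : R) * x ^ (pentagonal m + 5 * pentagonal n)
  · apply negOnePow_mul_pow_congr
    · rw [triangular_three_mul_sub_one]
      exact ⟨pentagonal n - m, by ring⟩
    · rw [four_mul_natCast_latticeExponent_add_one]
      push_cast
      linear_combination -2 * two_mul_natCast_pentagonal m - 10 * two_mul_natCast_pentagonal n
  · rw [neg_pow_eq_negOnePow_mul_pow, Int.negOnePow_add, Int.negOnePow_add, pow_add, pow_mul]
    push_cast
    ring

theorem latticeTerm_eq_triangular_mul_sq (x : R) (b k : ℤ) :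
    latticeTerm x (2 * k + b, 4 * k) =
      (-x ^ 2) ^ triangular b * (-x ^ 20) ^ k.natAbs ^ 2 := by
  obtain ⟨r, hr⟩ := Int.even_mul_succ_self k
  trans ((Int.negOnePow (triangular b + (k.natAbs ^ 2 : ℕ)) : ℤ) : R) *
    x ^ (2 * triangular b + 20 * k.natAbs ^ 2)
  · apply negOnePow_mul_pow_congr
    · rw [triangular_two_mul_add, natCast_natAbs_sq]
      exact ⟨r + 2 * k + k * b, by linear_combination hr⟩
    · rw [four_mul_natCast_latticeExponent_add_one]
      push_cast [sq_abs]
      linear_combination -4 * two_mul_natCast_triangular b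
  · simp only [neg_pow_eq_negOnePow_mul_pow, Int.negOnePow_add, pow_add, pow_mul]
    push_cast
    ring

theorem latticeTerm_eq_sq_mul_triangular (x : R) (b k : ℤ) :
    latticeTerm x (2 * k + b, 2 * b + 1) =
      -x * ((-x ^ 10) ^ triangular b * (-x ^ 4) ^ k.natAbs ^ 2) := by
  obtain ⟨r, hr⟩ := Int.even_mul_succ_self k
  trans ((Int.negOnePow (triangular b + (k.natAbs ^ 2 : ℕ) + 1) : ℤ) : R) *
    x ^ (1 + 10 * triangular b + 4 * k.natAbs ^ 2)
  · apply negOnePow_mul_pow_congr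
    · rw [triangular_two_mul_add, natCast_natAbs_sq]
      exact ⟨r + b + k * b, by linear_combination hr⟩
    · rw [four_mul_natCast_latticeExponent_add_one]
      push_cast [sq_abs]
      linear_combination -20 * two_mul_natCast_triangular b
  · simp only [neg_pow_eq_negOnePow_mul_pow, Int.negOnePow_add, Int.negOnePow_one, pow_add, pow_mul]
    push_cast
    ring

/-- Parametrizations of the classes `t ≡ 2`, `0` and `1 (mod 3)` of lattice points `(t, v)`. The
first two are exchanged by the reflection `(t, v) ↦ (-1 - t, -v)`. -/
def modThreeClass : Fin 3 → ℤ × ℤ → ℤ × ℤ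
  | 0, (m, n) => (3 * n - 1, n - m)
  | 1, (m, n) => (-1 - (3 * n - 1), -(n - m))
  | 2, (m, n) => (3 * m + 1, n)

theorem bijective_uncurry_modThreeClass : (Function.uncurry modThreeClass).Bijective := by
  constructor
  · rintro ⟨i, a, b⟩ ⟨j, c, d⟩ h
    fin_cases i <;> fin_cases j <;> grind [modThreeClass, Function.uncurry]
  · rintro ⟨t, v⟩
    obtain h | h | h : t % 3 = 2 ∨ t % 3 = 0 ∨ t % 3 = 1 := by lia
    · exact ⟨(0, t / 3 + 1 - v, t / 3 + 1), by grind [modThreeClass, Function.uncurry]⟩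
    · exact ⟨(1, v - t / 3, -(t / 3)), by grind [modThreeClass, Function.uncurry]⟩
    · exact ⟨(2, t / 3, v), by grind [modThreeClass, Function.uncurry]⟩

theorem latticeTerm_modThreeClass_two_eq_neg (x : R) (m n : ℤ) :
    latticeTerm x (modThreeClass 2 (m, 2 * m + 1 - n)) =
      -latticeTerm x (modThreeClass 2 (m, n)) := by
  refine latticeTerm_eq_neg ⟨m - n, ?_⟩ ?_ <;> simp only [modThreeClass] <;> ring

/-- Parametrizations of four classes of lattice points `(t, v)`: `v ≡ 0 (mod 4)`, then `v` odd with
`t ≡ (v - 1) / 2 (mod 2)`, then `v ≡ 2 (mod 4)`, then `v` odd with `t ≢ (v - 1) / 2 (mod 2)`. -/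
def modFourClass : Fin 4 → ℤ × ℤ → ℤ × ℤ
  | 0, (b, k) => (2 * k + b, 4 * k)
  | 1, (b, k) => (2 * k + b, 2 * b + 1)
  | 2, (b, k) => (2 * k + (b + 1), 4 * k + 2)
  | 3, (b, k) => (2 * k + (b + 1), 2 * b + 1)

theorem bijective_uncurry_modFourClass : (Function.uncurry modFourClass).Bijective := by
  constructor
  · rintro ⟨i, a, b⟩ ⟨j, c, d⟩ h
    fin_cases i <;> fin_cases j <;> grind [modFourClass, Function.uncurry]
  · rintro ⟨t, v⟩
    obtain h | h | ⟨h, h'⟩ | ⟨h, h'⟩ : v % 4 = 0 ∨ v % 4 = 2 ∨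
      (v % 2 = 1 ∧ (t - v / 2) % 2 = 0) ∨ (v % 2 = 1 ∧ (t - v / 2) % 2 = 1) := by lia
    · exact ⟨(0, t - 2 * (v / 4), v / 4), by grind [modFourClass, Function.uncurry]⟩
    · exact ⟨(2, t - 2 * (v / 4) - 1, v / 4), by grind [modFourClass, Function.uncurry]⟩
    · exact ⟨(1, v / 2, (t - v / 2) / 2), by grind [modFourClass, Function.uncurry]⟩
    · exact ⟨(3, v / 2, (t - v / 2) / 2), by grind [modFourClass, Function.uncurry]⟩

theorem latticeTerm_modFourClass_two_eq_neg (x : R) (b k : ℤ) :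
    latticeTerm x (modFourClass 2 (b, -1 - k)) = -latticeTerm x (modFourClass 2 (b, k)) := by
  refine latticeTerm_eq_neg ⟨-5 * k - 3 - 2 * k * b - b, ?_⟩ ?_ <;>
    simp only [modFourClass, triangular_two_mul_add] <;> ring

theorem latticeTerm_modFourClass_three_eq_neg (x : R) (b k : ℤ) :
    latticeTerm x (modFourClass 3 (b, -1 - k)) = -latticeTerm x (modFourClass 3 (b, k)) := by
  refine latticeTerm_eq_neg ⟨-k - 1 - 2 * k * b - b, ?_⟩ ?_ <;>
    simp only [modFourClass, triangular_two_mul_add] <;> ring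

variable [UniformSpace R] [IsUniformAddGroup R] [IsTopologicalRing R] [IsLinearTopology R R]
  [CompleteSpace R] {x : R}

theorem summable_latticeTerm (hx : IsTopologicallyNilpotent x) : Summable (latticeTerm x) :=
  summable_intCast_mul_pow hx _ finite_preimage_latticeExponent

variable [T2Space R] [IsAddTorsionFree R]

theorem hasSum_latticeTerm_eulerFun (hx : IsTopologicallyNilpotent x) :
    HasSum (latticeTerm x) (2 * (eulerFun x * eulerFun (-x ^ 5))) := by
  have := nonarchimedeanRing_of_isLinearTopology R
  have hx₅ : IsTopologicallyNilpotent (-x ^ 5) :=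
    isTopologicallyNilpotent_neg (isTopologicallyNilpotent_pow hx (by decide))
  have hprod := (hasSum_pentagonal hx).mul_of_nonarchimedean (hasSum_pentagonal hx₅)
  have hzero : HasSum (latticeTerm x ∘ modThreeClass 2) 0 :=
    hasSum_zero_of_comp_equiv_eq_neg ((summable_latticeTerm hx).comp_injective <|
      injective_of_bijective_uncurry bijective_uncurry_modThreeClass 2)
      (Equiv.prodShear (.refl ℤ) fun m ↦ .subLeft (2 * m + 1))
      fun p ↦ latticeTerm_modThreeClass_two_eq_neg x p.1 p.2
  have hsum := hasSum_sum_of_bijective modThreeClass bijective_uncurry_modThreeClass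
    (f := latticeTerm x)
    (s := ![eulerFun x * eulerFun (-x ^ 5), eulerFun x * eulerFun (-x ^ 5), 0]) fun k ↦ by
      fin_cases k
      · exact hprod.congr_fun fun p ↦ latticeTerm_eq_pentagonal x p.1 p.2
      · exact hprod.congr_fun fun p ↦
          (latticeTerm_reflect x _ _).trans (latticeTerm_eq_pentagonal x p.1 p.2)
      · exact hzero
  simpa [Fin.sum_univ_three, two_mul] using hsum

theorem hasSum_latticeTerm_theta (hx : IsTopologicallyNilpotent x) :
    HasSum (latticeTerm x) (2 * (thetaPsi (-x ^ 2) * thetaPhi (-x ^ 20) -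
      x * (thetaPsi (-x ^ 10) * thetaPhi (-x ^ 4)))) := by
  have := nonarchimedeanRing_of_isLinearTopology R
  have hnil {k : ℕ} (hk : k ≠ 0) : IsTopologicallyNilpotent (-x ^ k) :=
    isTopologicallyNilpotent_neg (isTopologicallyNilpotent_pow hx hk)
  have hprod {j k : ℕ} (hj : j ≠ 0) (hk : k ≠ 0) :=
    (hasSum_int_thetaPsi (hnil hj)).mul_of_nonarchimedean (hasSum_thetaPhi (hnil hk))
  have hsummable (i) : Summable (latticeTerm x ∘ modFourClass i) :=
    (summable_latticeTerm hx).comp_injective <|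
      injective_of_bijective_uncurry bijective_uncurry_modFourClass i
  let σ : ℤ × ℤ ≃ ℤ × ℤ := .prodCongr (.refl ℤ) (.subLeft (-1))
  have hsum := hasSum_sum_of_bijective modFourClass bijective_uncurry_modFourClass
    (f := latticeTerm x)
    (s := ![2 * thetaPsi (-x ^ 2) * thetaPhi (-x ^ 20),
      -x * (2 * thetaPsi (-x ^ 10) * thetaPhi (-x ^ 4)), 0, 0]) fun k ↦ by
      fin_cases k
      · exact (hprod (by decide) (by decide)).congr_fun fun p ↦
          latticeTerm_eq_triangular_mul_sq x p.1 p.2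
      · exact ((hprod (by decide) (by decide)).mul_left (-x)).congr_fun fun p ↦
          latticeTerm_eq_sq_mul_triangular x p.1 p.2
      · exact hasSum_zero_of_comp_equiv_eq_neg (hsummable 2) σ fun p ↦
          latticeTerm_modFourClass_two_eq_neg x p.1 p.2
      · exact hasSum_zero_of_comp_equiv_eq_neg (hsummable 3) σ fun p ↦
          latticeTerm_modFourClass_three_eq_neg x p.1 p.2
  convert hsum using 1
  simp only [Fin.sum_univ_four, Matrix.cons_val]
  ring

theorem eulerFun_mul_eulerFun_neg_pow_five (hx : IsTopologicallyNilpotent x) :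
    eulerFun x * eulerFun (-x ^ 5) = thetaPsi (-x ^ 2) * thetaPhi (-x ^ 20) -
      x * (thetaPsi (-x ^ 10) * thetaPhi (-x ^ 4)) := by
  have h := (hasSum_latticeTerm_eulerFun hx).unique (hasSum_latticeTerm_theta hx)
  simpa only [two_mul, ← two_nsmul, nsmul_right_inj two_ne_zero] using h

end Lattice

section EulerSeries

open scoped MvPowerSeries.WithPiTopology PowerSeries.WithPiTopology

instance isAddTorsionFree_powerSeries {R : Type*} [Semiring R] [IsAddTorsionFree R] :
    IsAddTorsionFree R⟦X⟧ :=
  inferInstanceAs (IsAddTorsionFree ((Unit →₀ ℕ) → R))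

theorem isTopologicallyNilpotent_X_pow {k : ℕ} (hk : k ≠ 0) :
    IsTopologicallyNilpotent (X ^ k : ℤ⟦X⟧) :=
  WithPiTopology.isTopologicallyNilpotent_of_constantCoeff_zero (by simp [hk])

theorem continuous_expand {R : Type*} [CommRing R] [TopologicalSpace R] {m : ℕ} (hm : m ≠ 0) :
    Continuous (expand (R := R) m hm) := by
  refine continuous_iff_continuousAt.mpr fun g ↦
    (WithPiTopology.tendsto_iff_coeff_tendsto R _ _ _).mpr fun n ↦ ?_
  simp only [coeff_expand]
  split_ifs
  · exact (WithPiTopology.continuous_coeff R _).tendsto g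
  · exact tendsto_const_nhds

/-- The power series `f_k = ∏_{n ≥ 1} (1 - X ^ (k n))`. -/
noncomputable def eulerSeries (k : ℕ) : ℤ⟦X⟧ := eulerFun (X ^ k)

theorem expand_eulerSeries {m k : ℕ} (hm : m ≠ 0) (hk : k ≠ 0) :
    expand m hm (eulerSeries k) = eulerSeries (m * k) := by
  have h := (hasProd_eulerFun (isTopologicallyNilpotent_X_pow hk)).map (expand m hm)
    (continuous_expand hm)
  refine h.unique ?_
  simpa [eulerSeries, Function.comp_def, pow_mul] using
    hasProd_eulerFun (isTopologicallyNilpotent_X_pow (mul_ne_zero hm hk))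

theorem constantCoeff_eulerSeries {k : ℕ} (hk : k ≠ 0) : constantCoeff (eulerSeries k) = 1 := by
  have h := (hasProd_eulerFun (isTopologicallyNilpotent_X_pow hk)).map constantCoeff
    (WithPiTopology.continuous_constantCoeff ℤ)
  refine h.unique ?_
  simp [Function.comp_def, hk]

theorem eulerSeries_ne_zero {k : ℕ} (hk : k ≠ 0) : eulerSeries k ≠ 0 :=
  fun h ↦ by simpa [h] using constantCoeff_eulerSeries hk

theorem eulerFun_neg_X_pow_mul {k : ℕ} (hk : k ≠ 0) :
    eulerFun (-X ^ k) * (eulerSeries k * eulerSeries (4 * k)) = eulerSeries (2 * k) ^ 3 := by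
  have h := eulerFun_neg_mul_eulerFun (isTopologicallyNilpotent_X_pow hk)
  simpa only [eulerSeries, ← pow_mul', mul_assoc] using h

theorem eulerSeries_mul_thetaPhi_neg {k : ℕ} (hk : k ≠ 0) :
    eulerSeries (2 * k) * thetaPhi (-X ^ k) = eulerSeries k ^ 2 := by
  simpa only [eulerSeries, ← pow_mul'] using
    eulerFun_sq_mul_thetaPhi_neg (isTopologicallyNilpotent_X_pow hk)

theorem eulerSeries_mul_thetaPsi {k : ℕ} (hk : k ≠ 0) :
    eulerSeries k * thetaPsi (X ^ k) = eulerSeries (2 * k) ^ 2 := by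
  simpa only [eulerSeries, ← pow_mul'] using
    eulerFun_mul_thetaPsi (isTopologicallyNilpotent_X_pow hk)

theorem eulerSeries_mul_thetaPhi {k : ℕ} (hk : k ≠ 0) :
    eulerSeries k ^ 2 * eulerSeries (4 * k) ^ 2 * thetaPhi (X ^ k) = eulerSeries (2 * k) ^ 5 := by
  have h := eulerFun_sq_mul_thetaPhi_neg
    (isTopologicallyNilpotent_neg (isTopologicallyNilpotent_X_pow hk))
  rw [neg_sq, neg_neg, ← pow_mul', ← eulerSeries] at h
  refine mul_left_cancel₀ (eulerSeries_ne_zero (mul_ne_zero two_ne_zero hk)) ?_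
  linear_combination eulerSeries k ^ 2 * eulerSeries (4 * k) ^ 2 * h +
    (eulerFun (-X ^ k) * (eulerSeries k * eulerSeries (4 * k)) + eulerSeries (2 * k) ^ 3) *
      eulerFun_neg_X_pow_mul hk

theorem eulerSeries_mul_thetaPsi_neg {k : ℕ} (hk : k ≠ 0) :
    eulerSeries (2 * k) * thetaPsi (-X ^ k) = eulerSeries k * eulerSeries (4 * k) := by
  have h := eulerFun_mul_thetaPsi
    (isTopologicallyNilpotent_neg (isTopologicallyNilpotent_X_pow hk))
  rw [neg_sq, ← pow_mul', ← eulerSeries] at h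
  refine mul_left_cancel₀ (pow_ne_zero 2 (eulerSeries_ne_zero (mul_ne_zero two_ne_zero hk))) ?_
  linear_combination -thetaPsi (-X ^ k) * eulerFun_neg_X_pow_mul hk +
    eulerSeries k * eulerSeries (4 * k) * h

end EulerSeries

local notation "𝐟" => eulerSeries

section EulerSeriesIdentities

open scoped PowerSeries.WithPiTopology

-- `f₅ / f₁ = f₈ f₂₀² / (f₂² f₄₀) + X f₄³ f₁₀ f₄₀ / (f₂³ f₈ f₂₀)`, cleared of denominators.
theorem eulerSeries_five_two_dissection :
    𝐟 2 ^ 3 * 𝐟 5 * 𝐟 8 * 𝐟 20 * 𝐟 40 =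
      𝐟 1 * (𝐟 2 * 𝐟 8 ^ 2 * 𝐟 20 ^ 3 + X * (𝐟 4 ^ 3 * 𝐟 10 * 𝐟 40 ^ 2)) := by
  have hlattice : eulerFun (-X : ℤ⟦X⟧) * 𝐟 5 = thetaPsi (-X ^ 2) * thetaPhi (-X ^ 20) +
      X * (thetaPsi (-X ^ 10) * thetaPhi (-X ^ 4)) := by
    have h := eulerFun_mul_eulerFun_neg_pow_five
      (isTopologicallyNilpotent_neg (isTopologicallyNilpotent_X_pow one_ne_zero))
    simpa [eulerSeries, (by decide : Odd 5).neg_pow, (by decide : Even 20).neg_pow,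
      (by decide : Even 10).neg_pow, (by decide : Even 4).neg_pow] using h
  have heuler : eulerFun (-X) * (𝐟 1 * 𝐟 4) = 𝐟 2 ^ 3 := by
    simpa using eulerFun_neg_X_pow_mul one_ne_zero
  have hpsi₂ : 𝐟 4 * thetaPsi (-X ^ 2) = 𝐟 2 * 𝐟 8 :=
    eulerSeries_mul_thetaPsi_neg (k := 2) (by decide)
  have hpsi₁₀ : 𝐟 20 * thetaPsi (-X ^ 10) = 𝐟 10 * 𝐟 40 :=
    eulerSeries_mul_thetaPsi_neg (k := 10) (by decide)
  have hphi₄ : 𝐟 8 * thetaPhi (-X ^ 4) = 𝐟 4 ^ 2 :=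
    eulerSeries_mul_thetaPhi_neg (k := 4) (by decide)
  have hphi₂₀ : 𝐟 40 * thetaPhi (-X ^ 20) = 𝐟 20 ^ 2 :=
    eulerSeries_mul_thetaPhi_neg (k := 20) (by decide)
  calc
    _ = 𝐟 1 * (𝐟 4 * 𝐟 8 * 𝐟 20 * 𝐟 40 * (eulerFun (-X) * 𝐟 5)) := by
      rw [← heuler]
      ring
    _ = 𝐟 1 * ((𝐟 4 * thetaPsi (-X ^ 2)) * (𝐟 40 * thetaPhi (-X ^ 20)) * (𝐟 8 * 𝐟 20) +
        X * ((𝐟 20 * thetaPsi (-X ^ 10)) * (𝐟 8 * thetaPhi (-X ^ 4)) * (𝐟 4 * 𝐟 40))) := by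
      rw [hlattice]
      ring
    _ = _ := by
      rw [hpsi₂, hpsi₁₀, hphi₄, hphi₂₀]
      ring

-- `f₁⁴ = f₄¹⁰ / (f₂² f₈⁴) - 4 X f₂² f₈⁴ / f₄²`, cleared of denominators.
theorem eulerSeries_one_pow_four_two_dissection :
    𝐟 1 ^ 4 * 𝐟 2 ^ 2 * 𝐟 4 ^ 2 * 𝐟 8 ^ 4 = 𝐟 4 ^ 12 - 4 * X * 𝐟 2 ^ 4 * 𝐟 8 ^ 8 := by
  have hsq : thetaPhi (-X : ℤ⟦X⟧) ^ 2 = thetaPhi (X ^ 2) ^ 2 - 4 * X * thetaPsi (X ^ 4) ^ 2 := by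
    simpa using thetaPhi_neg_sq (isTopologicallyNilpotent_X_pow one_ne_zero)
  have hphi₁ : 𝐟 2 * thetaPhi (-X) = 𝐟 1 ^ 2 := by
    simpa using eulerSeries_mul_thetaPhi_neg one_ne_zero
  have hphi₂ : 𝐟 2 ^ 2 * 𝐟 8 ^ 2 * thetaPhi (X ^ 2) = 𝐟 4 ^ 5 :=
    eulerSeries_mul_thetaPhi (k := 2) (by decide)
  have hpsi₄ : 𝐟 4 * thetaPsi (X ^ 4) = 𝐟 8 ^ 2 :=
    eulerSeries_mul_thetaPsi (k := 4) (by decide)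
  calc
    _ = 𝐟 2 ^ 4 * 𝐟 4 ^ 2 * 𝐟 8 ^ 4 * thetaPhi (-X) ^ 2 := by
      linear_combination -𝐟 2 ^ 2 * 𝐟 4 ^ 2 * 𝐟 8 ^ 4 * (𝐟 2 * thetaPhi (-X) + 𝐟 1 ^ 2) * hphi₁
    _ = (𝐟 2 ^ 2 * 𝐟 8 ^ 2 * thetaPhi (X ^ 2)) ^ 2 * 𝐟 4 ^ 2 -
        4 * X * 𝐟 2 ^ 4 * 𝐟 8 ^ 4 * (𝐟 4 * thetaPsi (X ^ 4)) ^ 2 := by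
      rw [hsq]
      ring
    _ = _ := by
      rw [hphi₂, hpsi₄]
      ring

end EulerSeriesIdentities

section WeightedMultisets

variable {α : Type*} {w : α → ℕ} {S : Set α} {a : α} {n N : ℕ}

/-- The multisets with all elements in `S` whose weights add up to `n`. -/
def multisetsOfWeight (w : α → ℕ) (S : Set α) (n : ℕ) : Set (Multiset α) :=
  {M | (∀ x ∈ M, x ∈ S) ∧ (M.map w).sum = n}

theorem weight_le_of_mem_multisetsOfWeight {M : Multiset α} (hM : M ∈ multisetsOfWeight w S n)
    (ha : a ∈ M) : w a ≤ n :=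
  (Multiset.le_sum_of_mem (Multiset.mem_map_of_mem w ha)).trans_eq hM.2

theorem multisetsOfWeight_mono {T : Set α} (h : ∀ x ∈ S, w x ≤ n → x ∈ T) :
    multisetsOfWeight w S n ⊆ multisetsOfWeight w T n :=
  fun _ hM ↦ ⟨fun x hx ↦ h x (hM.1 x hx) (weight_le_of_mem_multisetsOfWeight hM hx), hM.2⟩

theorem multisetsOfWeight_insert_of_lt (h : n < w a) :
    multisetsOfWeight w (insert a S) n = multisetsOfWeight w S n :=
  (multisetsOfWeight_mono fun _ hx hn ↦ hx.resolve_left fun hxa ↦ (hxa ▸ hn).not_gt h).antisymm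
    (multisetsOfWeight_mono fun _ hx _ ↦ .inr hx)

theorem multisetsOfWeight_insert_add :
    multisetsOfWeight w (insert a S) (n + w a) =
      multisetsOfWeight w S (n + w a) ∪ (a ::ₘ ·) '' multisetsOfWeight w (insert a S) n := by
  ext M
  constructor
  · rintro ⟨hmem, hsum⟩
    by_cases ha : a ∈ M
    · obtain ⟨M, rfl⟩ := Multiset.exists_cons_of_mem ha
      rw [Multiset.map_cons, Multiset.sum_cons, add_comm, add_left_inj] at hsum
      exact .inr ⟨M, ⟨fun x hx ↦ hmem x (Multiset.mem_cons_of_mem hx), hsum⟩, rfl⟩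
    · exact .inl ⟨fun x hx ↦ (hmem x hx).resolve_left fun hxa ↦ ha (hxa ▸ hx), hsum⟩
  · rintro (hM | ⟨M, ⟨hmem, hsum⟩, rfl⟩)
    · exact multisetsOfWeight_mono (fun _ hx _ ↦ .inr hx) hM
    · refine ⟨Multiset.forall_mem_cons.mpr ⟨Set.mem_insert a S, hmem⟩, ?_⟩
      rw [Multiset.map_cons, Multiset.sum_cons, hsum, add_comm]

theorem multisetsOfWeight_empty : multisetsOfWeight w ∅ n = if n = 0 then {0} else ∅ := by
  ext M
  have hM : (∀ x ∈ M, x ∈ (∅ : Set α)) ↔ M = 0 := Multiset.eq_zero_iff_forall_notMem.symm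
  rw [multisetsOfWeight, Set.mem_ofPred_eq, hM]
  split_ifs with hn
  · simp +contextual [hn]
  · simp +contextual [Ne.symm hn]

theorem finite_multisetsOfWeight (hS : S.Finite) (hw : ∀ x ∈ S, 0 < w x) (n : ℕ) :
    (multisetsOfWeight w S n).Finite := by
  induction S, hS using Set.Finite.induction_on generalizing n with
  | empty =>
    rw [multisetsOfWeight_empty]
    split_ifs <;> simp
  | @insert a S _ _ ih =>
    have ih := ih fun x hx ↦ hw x (.inr hx)
    induction n using Nat.strong_induction_on with
    | _ n ihn =>
      obtain hn | hn := lt_or_ge n (w a)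
      · rw [multisetsOfWeight_insert_of_lt hn]
        exact ih n
      · obtain ⟨n, rfl⟩ := Nat.exists_eq_add_of_le' hn
        rw [multisetsOfWeight_insert_add]
        have ha := hw a (.inl rfl)
        exact (ih _).union ((ihn n (by lia)).image _)

/-- The generating function of the multisets with elements in `S`, by weight. As `Set.ncard` of an
infinite set is `0`, this is meaningful only if each weight is attained finitely often. -/
noncomputable def multisetSeries (w : α → ℕ) (S : Set α) : ℤ⟦X⟧ :=
  mk fun n ↦ ((multisetsOfWeight w S n).ncard : ℤ)

theorem multisetSeries_insert_mul (hS : S.Finite) (hw : ∀ x ∈ insert a S, 0 < w x) (ha : a ∉ S) :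
    multisetSeries w (insert a S) * (1 - X ^ w a) = multisetSeries w S := by
  ext n
  rw [mul_sub, mul_one, map_sub, coeff_mul_X_pow']
  simp only [multisetSeries, coeff_mk]
  split_ifs with hn
  · obtain ⟨n, rfl⟩ := Nat.exists_eq_add_of_le' hn
    have hdisj : Disjoint (multisetsOfWeight w S (n + w a))
        ((a ::ₘ ·) '' multisetsOfWeight w (insert a S) n) := by
      rw [Set.disjoint_left]
      rintro _ ⟨hmem, -⟩ ⟨M, -, rfl⟩
      exact ha (hmem a (Multiset.mem_cons_self a M))
    rw [multisetsOfWeight_insert_add, Set.ncard_union_eq hdisj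
      (finite_multisetsOfWeight hS (fun x hx ↦ hw x (.inr hx)) _)
      ((finite_multisetsOfWeight (hS.insert a) hw n).image _),
      Set.ncard_image_of_injective _ fun _ _ ↦ (Multiset.cons_inj_right a).mp,
      Nat.add_sub_cancel, Nat.cast_add, add_sub_cancel_right]
  · rw [multisetsOfWeight_insert_of_lt (not_le.mp hn), sub_zero]

theorem multisetSeries_mul_prod (T : Finset α) (hw : ∀ x ∈ T, 0 < w x) :
    multisetSeries w T * ∏ x ∈ T, (1 - X ^ w x) = 1 := by
  classical
  induction T using Finset.induction_on with
  | empty =>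
    ext n
    rw [coe_empty, prod_empty, mul_one, multisetSeries, coeff_mk, multisetsOfWeight_empty,
      coeff_one]
    split_ifs <;> simp
  | insert a T ha ih =>
    rw [prod_insert ha, ← mul_assoc, coe_insert,
      multisetSeries_insert_mul T.finite_toSet (by simpa using hw) (by simpa using ha)]
    exact ih fun x hx ↦ hw x (mem_insert_of_mem hx)

theorem X_pow_dvd_multisetSeries_mul_prod_sub_one {T : Finset α}
    (hT : ∀ x, x ∈ T ↔ x ∈ S ∧ w x < N) (hw : ∀ x ∈ S, 0 < w x) :
    X ^ N ∣ multisetSeries w S * ∏ x ∈ T, (1 - X ^ w x) - 1 := by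
  have hone := multisetSeries_mul_prod T fun x hx ↦ hw x ((hT x).mp hx).1
  nth_rw 2 [← hone]
  rw [← sub_mul]
  refine Dvd.dvd.mul_right (X_pow_dvd_iff.mpr fun n hn ↦ ?_) _
  have htrunc : multisetsOfWeight w S n = multisetsOfWeight w T n :=
    (multisetsOfWeight_mono fun x hx hxn ↦ (hT x).mpr ⟨hx, hxn.trans_lt hn⟩).antisymm
      (multisetsOfWeight_mono fun x hx _ ↦ ((hT x).mp hx).1)
  rw [map_sub, multisetSeries, multisetSeries, coeff_mk, coeff_mk, htrunc, sub_self]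

end WeightedMultisets

section ColoredRegular

open scoped MvPowerSeries.WithPiTopology PowerSeries.WithPiTopology

variable {l m : ℕ}

/-- The generating function `∑ b^k_{l,m}(n) X ^ n`. -/
noncomputable def coloredRegularSeries (k l m : ℕ) : ℤ⟦X⟧ :=
  mk fun n ↦ (coloredRegular k l m n : ℤ)

theorem coloredRegularSeries_eq_multisetSeries (k l m : ℕ) :
    coloredRegularSeries k l m =
      multisetSeries Prod.fst {x : ℕ × ℕ | ¬ l ∣ x.1 ∧ ¬ m ∣ x.1 ∧ x.2 < k} := by
  ext n
  rw [coloredRegularSeries, multisetSeries, coeff_mk, coeff_mk, ← Nat.card_coe_set_eq]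
  rfl

/-- The factors of `∏_{d ∣ n} (1 - X ^ n)`, with the shift `n = i + 1`. -/
noncomputable def eulerFactor (d i : ℕ) : ℤ⟦X⟧ := if d ∣ i + 1 then 1 - X ^ (i + 1) else 1

theorem hasProd_eulerFactor {d : ℕ} (hd : d ≠ 0) : HasProd (eulerFactor d) (eulerSeries d) := by
  have hpos (i : ℕ) : d * (i + 1) - 1 + 1 = d * (i + 1) :=
    Nat.sub_add_cancel (Nat.mul_pos (Nat.pos_of_ne_zero hd) i.succ_pos)
  have hinj : Function.Injective fun i ↦ d * (i + 1) - 1 := fun i j hij ↦ by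
    have hsucc := congrArg (· + 1) hij
    simpa [hpos, hd] using hsucc
  refine (hinj.hasProd_iff fun n hn ↦ if_neg ?_).mp ?_
  · rintro ⟨j, hj⟩
    obtain ⟨i, rfl⟩ := Nat.exists_eq_succ_of_ne_zero (n := j) (by rintro rfl; simp at hj)
    exact hn ⟨i, by simp [← hj]⟩
  · simpa [Function.comp_def, eulerFactor, eulerSeries, hpos, pow_mul] using
      hasProd_eulerFun (isTopologicallyNilpotent_X_pow hd)

theorem tendsto_coloredRegularSeries_mul_prod_pow (k l m : ℕ) :
    Tendsto (fun N ↦ coloredRegularSeries k l m *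
      (∏ i ∈ range N, if ¬ l ∣ i + 1 ∧ ¬ m ∣ i + 1 then 1 - X ^ (i + 1) else 1) ^ k)
      atTop (𝓝 1) := by
  refine tendsto_of_pow_dvd_sub (isTopologicallyNilpotent_X_pow one_ne_zero) tendsto_const_nhds
    fun N ↦ ?_
  have hprod : ∏ x ∈ {i ∈ range (N + 1) | ¬ l ∣ i ∧ ¬ m ∣ i} ×ˢ range k, (1 - X ^ x.1 : ℤ⟦X⟧) =
      (∏ i ∈ range N, if ¬ l ∣ i + 1 ∧ ¬ m ∣ i + 1 then 1 - X ^ (i + 1) else 1) ^ k := by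
    rw [prod_product]
    simp only [prod_const, card_range]
    rw [prod_pow, prod_filter, prod_range_succ', if_neg (by simp), mul_one]
  rw [coloredRegularSeries_eq_multisetSeries, pow_one, ← hprod]
  refine (pow_dvd_pow X N.le_succ).trans
    (X_pow_dvd_multisetSeries_mul_prod_sub_one (fun x ↦ ?_) fun x hx ↦ ?_)
  · simp only [mem_product, mem_filter, mem_range, Set.mem_ofPred_eq]
    tauto
  · exact Nat.pos_of_ne_zero fun h ↦ hx.1 (h ▸ dvd_zero l)

theorem coloredRegularSeries_mul_pow (k : ℕ) (hl : l ≠ 0) (hm : m ≠ 0) (hlm : l.Coprime m) :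
    coloredRegularSeries k l m * (eulerSeries 1 * eulerSeries (l * m)) ^ k =
      (eulerSeries l * eulerSeries m) ^ k := by
  have hfactor (i : ℕ) : (if ¬ l ∣ i + 1 ∧ ¬ m ∣ i + 1 then 1 - X ^ (i + 1) else 1) *
      (eulerFactor l i * eulerFactor m i) = eulerFactor 1 i * eulerFactor (l * m) i := by
    have hdvd : l * m ∣ i + 1 ↔ l ∣ i + 1 ∧ m ∣ i + 1 :=
      ⟨fun h ↦ ⟨dvd_of_mul_right_dvd h, dvd_of_mul_left_dvd h⟩,
        fun h ↦ hlm.mul_dvd_of_dvd_of_dvd h.1 h.2⟩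
    by_cases hl : l ∣ i + 1 <;> by_cases hm : m ∣ i + 1 <;> simp [eulerFactor, hdvd, hl, hm]
  have hnum := ((hasProd_eulerFactor hl).mul (hasProd_eulerFactor hm)).tendsto_prod_nat.pow k
  have hden := ((hasProd_eulerFactor one_ne_zero).mul
    (hasProd_eulerFactor (mul_ne_zero hl hm))).tendsto_prod_nat.pow k
  have hlim := (tendsto_coloredRegularSeries_mul_prod_pow k l m).mul hnum
  simp only [mul_assoc, ← mul_pow, ← prod_mul_distrib, hfactor, one_mul] at hlim
  exact tendsto_nhds_unique (hden.const_mul _) hlim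

end ColoredRegular

section OddPart

variable {R : Type*} [Semiring R]

/-- The odd dissection `∑ a(n) X ^ n ↦ ∑ a(2 n + 1) X ^ n` of a power series. -/
noncomputable def oddPart : R⟦X⟧ →ₗ[R] R⟦X⟧ where
  toFun g := mk fun n ↦ coeff (2 * n + 1) g
  map_add' _ _ := by ext; simp
  map_smul' _ _ := by ext; simp

theorem coeff_oddPart (n : ℕ) (g : R⟦X⟧) : coeff n (oddPart g) = coeff (2 * n + 1) g :=
  coeff_mk n fun n ↦ coeff (2 * n + 1) g

theorem natCast_dvd_oddPart {m : ℕ} {f : R⟦X⟧} (h : (m : R⟦X⟧) ∣ f) :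
    (m : R⟦X⟧) ∣ oddPart f := by
  obtain ⟨c, rfl⟩ := h
  exact ⟨oddPart c, by rw [← nsmul_eq_mul, map_nsmul, nsmul_eq_mul]⟩

end OddPart

section TwoDissection

variable {R : Type*} [CommRing R]

theorem oddPart_expand_two_add_X_mul (v w : R⟦X⟧) :
    oddPart (expand 2 two_ne_zero v + X * expand 2 two_ne_zero w) = w := by
  ext n
  rw [coeff_oddPart, map_add, coeff_expand_of_not_dvd _ _ _ (by lia), coeff_succ_X_mul,
    coeff_expand_mul, zero_add]

theorem exists_eq_expand_two_add (g : R⟦X⟧) :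
    ∃ a, g = expand 2 two_ne_zero a + X * expand 2 two_ne_zero (oddPart g) := by
  refine ⟨mk fun n ↦ coeff (2 * n) g, ?_⟩
  ext n
  obtain ⟨k, rfl | rfl⟩ := n.even_or_odd'
  · rw [map_add, coeff_expand_mul, coeff_mk]
    cases k with
    | zero => simp
    | succ k =>
      rw [mul_add_one, coeff_succ_X_mul, coeff_expand_of_not_dvd _ _ _ (by lia), add_zero]
  · rw [map_add, coeff_expand_of_not_dvd _ _ _ (by lia), coeff_succ_X_mul, coeff_expand_mul,
      coeff_oddPart, zero_add]

theorem oddPart_mul_expand_two (g u : R⟦X⟧) :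
    oddPart (g * expand 2 two_ne_zero u) = oddPart g * u := by
  obtain ⟨a, ha⟩ := exists_eq_expand_two_add g
  calc
    oddPart (g * expand 2 two_ne_zero u) = oddPart (expand 2 two_ne_zero (a * u) +
        X * expand 2 two_ne_zero (oddPart g * u)) := by
      conv_lhs => rw [ha, add_mul, mul_assoc, ← map_mul, ← map_mul]
    _ = oddPart g * u := oddPart_expand_two_add_X_mul _ _

theorem oddPart_mul_eq_of_mul_expand_two_eq {g u v w : R⟦X⟧}
    (h : g * expand 2 two_ne_zero u = expand 2 two_ne_zero v + X * expand 2 two_ne_zero w) :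
    oddPart g * u = w := by
  rw [← oddPart_mul_expand_two, h, oddPart_expand_two_add_X_mul]

theorem natCast_dvd_oddPart_mul_sub {m : ℕ} {f g u v w : R⟦X⟧} (hdvd : (m : R⟦X⟧) ∣ f)
    (hf : f = g * expand 2 two_ne_zero u -
      (expand 2 two_ne_zero v + X * expand 2 two_ne_zero w)) :
    (m : R⟦X⟧) ∣ oddPart g * u - w := by
  simpa only [hf, map_sub, oddPart_mul_expand_two, oddPart_expand_two_add_X_mul] using
    natCast_dvd_oddPart hdvd

end TwoDissection

section Congruences

theorem natCast_dvd_iff_dvd_coeff {R : Type*} [Semiring R] {m : ℕ} {f : R⟦X⟧} :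
    (m : R⟦X⟧) ∣ f ↔ ∀ n, (m : R) ∣ coeff n f := by
  constructor
  · rintro ⟨c, rfl⟩ n
    exact ⟨coeff n c, by rw [← nsmul_eq_mul, map_nsmul, nsmul_eq_mul]⟩
  · intro h
    choose c hc using h
    exact ⟨mk c, by ext n; rw [← nsmul_eq_mul, map_nsmul, coeff_mk, nsmul_eq_mul, hc]⟩

theorem prime_dvd_expand_sub_pow (p : ℕ) [hp : Fact p.Prime] (f : ℤ⟦X⟧) :
    (p : ℤ⟦X⟧) ∣ expand p hp.out.ne_zero f - f ^ p := by
  have hmod :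
      PowerSeries.map (Int.castRingHom (ZMod p)) (expand p hp.out.ne_zero f - f ^ p) = 0 := by
    have h := MvPowerSeries.map_frobenius_expand (p := p) (hp := hp.out.ne_zero)
      (f := PowerSeries.map (Int.castRingHom (ZMod p)) f)
    rw [ZMod.frobenius_zmod, MvPowerSeries.map_id] at h
    rw [map_sub, map_pow, PowerSeries.map_expand]
    exact sub_eq_zero.mpr h
  refine natCast_dvd_iff_dvd_coeff.mpr fun n ↦ ?_
  rw [← ZMod.intCast_zmod_eq_zero_iff_dvd]
  simpa only [coeff_map, map_zero, eq_intCast] using congrArg (coeff n) hmod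

theorem isUnit_eulerSeries {k : ℕ} (hk : k ≠ 0) : IsUnit (eulerSeries k) := by
  rw [isUnit_iff_constantCoeff, constantCoeff_eulerSeries hk]
  exact isUnit_one

theorem prime_dvd_eulerSeries_sub_pow (p : ℕ) [hp : Fact p.Prime] {k : ℕ} (hk : k ≠ 0) :
    (p : ℤ⟦X⟧) ∣ eulerSeries (p * k) - eulerSeries k ^ p := by
  simpa only [expand_eulerSeries hp.out.ne_zero hk] using prime_dvd_expand_sub_pow p (eulerSeries k)

theorem four_dvd_eulerSeries_one_pow_four_sub : (4 : ℤ⟦X⟧) ∣ 𝐟 1 ^ 4 - 𝐟 2 ^ 2 := by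
  obtain ⟨c, hc⟩ := prime_dvd_eulerSeries_sub_pow 2 one_ne_zero
  exact ⟨c ^ 2 - 𝐟 2 * c, by push_cast at hc; linear_combination (-𝐟 1 ^ 2 - 𝐟 2 + 2 * c) * hc⟩

local notation "𝐆" => coloredRegularSeries 2 4 5

theorem coloredRegularSeries_mul_sq : 𝐆 * (𝐟 1 * 𝐟 20) ^ 2 = (𝐟 4 * 𝐟 5) ^ 2 :=
  coloredRegularSeries_mul_pow 2 four_ne_zero (by decide) (by decide)

theorem coloredRegularSeries_mul_eq_sq :
    𝐆 * (𝐟 2 ^ 6 * 𝐟 8 ^ 2 * 𝐟 20 ^ 4 * 𝐟 40 ^ 2) =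
      𝐟 4 ^ 2 * (𝐟 2 * 𝐟 8 ^ 2 * 𝐟 20 ^ 3 + X * (𝐟 4 ^ 3 * 𝐟 10 * 𝐟 40 ^ 2)) ^ 2 := by
  refine mul_left_cancel₀ (pow_ne_zero 2 (eulerSeries_ne_zero one_ne_zero)) ?_
  linear_combination 𝐟 2 ^ 6 * 𝐟 8 ^ 2 * 𝐟 20 ^ 2 * 𝐟 40 ^ 2 * coloredRegularSeries_mul_sq +
    𝐟 4 ^ 2 * (𝐟 2 ^ 3 * 𝐟 5 * 𝐟 8 * 𝐟 20 * 𝐟 40 + 𝐟 1 * (𝐟 2 * 𝐟 8 ^ 2 * 𝐟 20 ^ 3 +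
      X * (𝐟 4 ^ 3 * 𝐟 10 * 𝐟 40 ^ 2))) * eulerSeries_five_two_dissection

theorem oddPart_coloredRegularSeries_mul : oddPart 𝐆 * (𝐟 1 ^ 5 * 𝐟 10) = 2 * (𝐟 2 ^ 5 * 𝐟 5) := by
  have hdissect := oddPart_mul_eq_of_mul_expand_two_eq (g := 𝐆)
    (u := 𝐟 1 ^ 6 * 𝐟 4 ^ 2 * 𝐟 10 ^ 4 * 𝐟 20 ^ 2)
    (v := 𝐟 1 ^ 2 * 𝐟 2 ^ 2 * 𝐟 4 ^ 4 * 𝐟 10 ^ 6 + X * (𝐟 2 ^ 8 * 𝐟 5 ^ 2 * 𝐟 20 ^ 4))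
    (w := 2 * (𝐟 1 * 𝐟 2 ^ 5 * 𝐟 4 ^ 2 * 𝐟 5 * 𝐟 10 ^ 3 * 𝐟 20 ^ 2)) <| by
      simp only [map_mul, map_pow, map_add, map_ofNat, expand_X, expand_eulerSeries, ne_eq,
        one_ne_zero, OfNat.ofNat_ne_zero, not_false_eq_true, Nat.reduceMul]
      linear_combination coloredRegularSeries_mul_eq_sq
  have hne : 𝐟 1 * 𝐟 4 ^ 2 * 𝐟 10 ^ 3 * 𝐟 20 ^ 2 ≠ 0 := by
    simp [eulerSeries_ne_zero]
  refine mul_right_cancel₀ hne ?_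
  linear_combination hdissect

theorem eight_dvd_oddPart_mul_sub :
    (8 : ℤ⟦X⟧) ∣ oddPart 𝐆 * (𝐟 8 * 𝐟 10 * 𝐟 20 * 𝐟 40) -
      2 * (𝐟 2 * 𝐟 8 ^ 2 * 𝐟 20 ^ 3 + X * (𝐟 4 ^ 3 * 𝐟 10 * 𝐟 40 ^ 2)) := by
  have hodd := oddPart_coloredRegularSeries_mul
  obtain ⟨H, hH⟩ : 2 ∣ oddPart 𝐆 := by
    have hunit : IsUnit (𝐟 1 ^ 5 * 𝐟 10) := by simp [isUnit_eulerSeries]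
    exact hunit.dvd_mul_right.mp (Dvd.intro _ hodd.symm)
  obtain ⟨D, hD⟩ := four_dvd_eulerSeries_one_pow_four_sub
  have hexact : oddPart 𝐆 * 𝐟 1 ^ 4 * (𝐟 8 * 𝐟 10 * 𝐟 20 * 𝐟 40) =
      2 * 𝐟 2 ^ 2 * (𝐟 2 * 𝐟 8 ^ 2 * 𝐟 20 ^ 3 + X * (𝐟 4 ^ 3 * 𝐟 10 * 𝐟 40 ^ 2)) := by
    refine mul_left_cancel₀ (eulerSeries_ne_zero one_ne_zero) ?_
    linear_combination 𝐟 8 * 𝐟 20 * 𝐟 40 * hodd + 2 * 𝐟 2 ^ 2 * eulerSeries_five_two_dissection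
  have hunit : IsUnit (𝐟 2 ^ 2) := by simp [isUnit_eulerSeries]
  refine hunit.dvd_mul_left.mp ⟨-(H * D * (𝐟 8 * 𝐟 10 * 𝐟 20 * 𝐟 40)), ?_⟩
  linear_combination hexact - oddPart 𝐆 * (𝐟 8 * 𝐟 10 * 𝐟 20 * 𝐟 40) * hD -
    4 * D * (𝐟 8 * 𝐟 10 * 𝐟 20 * 𝐟 40) * hH

theorem eight_dvd_oddPart_oddPart_mul_sub :
    (8 : ℤ⟦X⟧) ∣ oddPart (oddPart 𝐆) * (𝐟 4 * 𝐟 10) - 2 * (𝐟 2 ^ 3 * 𝐟 20) := by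
  have hdissect : (8 : ℤ⟦X⟧) ∣ oddPart (oddPart 𝐆) * (𝐟 4 * 𝐟 5 * 𝐟 10 * 𝐟 20) -
      2 * (𝐟 2 ^ 3 * 𝐟 5 * 𝐟 20 ^ 2) := by
    refine natCast_dvd_oddPart_mul_sub (m := 8) (v := 2 * (𝐟 1 * 𝐟 4 ^ 2 * 𝐟 10 ^ 3))
      eight_dvd_oddPart_mul_sub ?_
    simp only [map_mul, map_pow, map_ofNat, expand_eulerSeries, ne_eq, one_ne_zero,
      OfNat.ofNat_ne_zero, not_false_eq_true, Nat.reduceMul]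
    ring
  have hunit : IsUnit (𝐟 5 * 𝐟 20) := by simp [isUnit_eulerSeries]
  refine hunit.dvd_mul_left.mp ?_
  convert hdissect using 1
  ring

theorem eight_dvd_oddPart_oddPart_oddPart : (8 : ℤ⟦X⟧) ∣ oddPart (oddPart (oddPart 𝐆)) := by
  have hdissect : (8 : ℤ⟦X⟧) ∣ oddPart (oddPart (oddPart 𝐆)) * (𝐟 2 * 𝐟 5) - 0 := by
    refine natCast_dvd_oddPart_mul_sub (m := 8) (v := 2 * (𝐟 1 ^ 3 * 𝐟 10))
      eight_dvd_oddPart_oddPart_mul_sub ?_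
    simp only [map_zero, map_mul, map_pow, map_ofNat, expand_eulerSeries, ne_eq, one_ne_zero,
      OfNat.ofNat_ne_zero, not_false_eq_true, Nat.reduceMul, mul_zero, add_zero]
  have hunit : IsUnit (𝐟 2 * 𝐟 5) := by simp [isUnit_eulerSeries]
  rwa [sub_zero, hunit.dvd_mul_right] at hdissect

theorem five_dvd_coloredRegularSeries_mul_sub : (5 : ℤ⟦X⟧) ∣ 𝐆 * 𝐟 4 ^ 8 - 𝐟 1 ^ 8 := by
  have : Fact (Nat.Prime 5) := ⟨by norm_num⟩
  obtain ⟨c, hc⟩ := prime_dvd_eulerSeries_sub_pow 5 one_ne_zero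
  obtain ⟨d, hd⟩ := prime_dvd_eulerSeries_sub_pow 5 four_ne_zero
  push_cast at hc hd
  have hunit : IsUnit (𝐟 1 ^ 2 * 𝐟 4 ^ 2) := by simp [isUnit_eulerSeries]
  refine hunit.dvd_mul_left.mp
    ⟨c * 𝐟 4 ^ 2 * (𝐟 5 + 𝐟 1 ^ 5) - d * 𝐆 * 𝐟 1 ^ 2 * (𝐟 20 + 𝐟 4 ^ 5), ?_⟩
  linear_combination coloredRegularSeries_mul_sq + 𝐟 4 ^ 2 * (𝐟 5 + 𝐟 1 ^ 5) * hc -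
    𝐆 * 𝐟 1 ^ 2 * (𝐟 20 + 𝐟 4 ^ 5) * hd

theorem five_dvd_oddPart_add_eight : (5 : ℤ⟦X⟧) ∣ oddPart 𝐆 + 8 := by
  have hdissect : (5 : ℤ⟦X⟧) ∣ oddPart 𝐆 * (𝐟 1 ^ 4 * 𝐟 2 ^ 12 * 𝐟 4 ^ 8) -
      -8 * (𝐟 1 ^ 4 * 𝐟 2 ^ 12 * 𝐟 4 ^ 8) := by
    refine natCast_dvd_oddPart_mul_sub (m := 5)
      (v := 𝐟 2 ^ 24 + 16 * X * (𝐟 1 ^ 8 * 𝐟 4 ^ 16))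
      (five_dvd_coloredRegularSeries_mul_sub.mul_left (𝐟 2 ^ 4 * 𝐟 4 ^ 4 * 𝐟 8 ^ 8)) ?_
    simp only [map_mul, map_pow, map_add, map_neg, map_ofNat, expand_X, expand_eulerSeries, ne_eq,
      one_ne_zero, OfNat.ofNat_ne_zero, not_false_eq_true, Nat.reduceMul]
    linear_combination -(𝐟 1 ^ 4 * 𝐟 2 ^ 2 * 𝐟 4 ^ 2 * 𝐟 8 ^ 4 + 𝐟 4 ^ 12 -
      4 * X * 𝐟 2 ^ 4 * 𝐟 8 ^ 8) * eulerSeries_one_pow_four_two_dissection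
  have hunit : IsUnit (𝐟 1 ^ 4 * 𝐟 2 ^ 12 * 𝐟 4 ^ 8) := by simp [isUnit_eulerSeries]
  rwa [← sub_mul, hunit.dvd_mul_right, sub_neg_eq_add] at hdissect

theorem eight_dvd_coloredRegular (n : ℕ) : 8 ∣ coloredRegular 2 4 5 (8 * n + 7) := by
  have h := natCast_dvd_iff_dvd_coeff (m := 8).mp eight_dvd_oddPart_oddPart_oddPart n
  rw [coeff_oddPart, coeff_oddPart, coeff_oddPart, coloredRegularSeries, coeff_mk] at h
  rw [show 8 * n + 7 = 2 * (2 * (2 * n + 1) + 1) + 1 by ring]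
  exact_mod_cast h

theorem five_dvd_coloredRegular {n : ℕ} (hn : n ≠ 0) : 5 ∣ coloredRegular 2 4 5 (2 * n + 1) := by
  have h := natCast_dvd_iff_dvd_coeff (m := 5).mp five_dvd_oddPart_add_eight n
  have hconst : coeff n (8 : ℤ⟦X⟧) = 0 := by
    rw [← map_ofNat C 8, coeff_C_of_ne_zero hn]
  rw [map_add, coeff_oddPart, hconst, add_zero, coloredRegularSeries, coeff_mk] at h
  exact_mod_cast h

end Congruences

theorem stmt_16 (n : ℕ) :
    coloredRegular 2 4 5 (8 * n + 7) ≡ 0 [MOD 40] := by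
  have hfive : 5 ∣ coloredRegular 2 4 5 (8 * n + 7) := by
    rw [show 8 * n + 7 = 2 * (4 * n + 3) + 1 by ring]
    exact five_dvd_coloredRegular (by lia)
  exact Nat.modEq_zero_iff_dvd.mpr <|
    Nat.Coprime.mul_dvd_of_dvd_of_dvd (by decide) (eight_dvd_coloredRegular n) hfive
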